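/- Let F be a field of prime characteristic p or characteristic 0, let n ≥ 2, k ∈ {1,…,n}, and suppose f(x₁,…,xₙ) = x₁^k + ⋯ + xₙ^k + g(x₁,…,xₙ) with deg g < k. For any finite subset A of F with |A| = m ≥ n such that k | n or k | (m − n), we have |{ f(x₁,…,xₙ) : x₁,…,xₙ ∈ A pairwise distinct }| ≥ min{ p(F), n(m−n)/k + 1 }. -/

import Mathlib

open MvPolynomial

theorem aux_cast_inj {F : Type*} [Field F] {a b : ℕ} (hb : ((Nat.factorial b : ℕ) : F) ≠ 0)
    (hab : a < b) : (a : F) ≠ (b : F) := by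
  intro h
  apply hb
  have h1 : ((b - a : ℕ) : F) = 0 := by
    rw [Nat.cast_sub hab.le, h, sub_self]
  obtain ⟨c, hc⟩ := Nat.dvd_factorial (m := b - a) (n := b) (by omega) (by omega)
  rw [hc, Nat.cast_mul, h1, zero_mul]

theorem aux_det {F : Type*} [Field F] (n k : ℕ) (e : ℕ → ℕ)
    (he : ∀ i < n, ∀ j < n, e i = e j → i = j)
    (hfac : ∀ i < n, ((Nat.factorial (e i / k) : ℕ) : F) ≠ 0)
    (H : ∀ j < n, ∃ ι : ℕ → ℕ, ∀ t ≤ j / k, ι t < n ∧ e (ι t) % k = j % k ∧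
      ∀ t' ≤ j / k, ι t = ι t' → t = t') :
    (Matrix.of fun i j : Fin n => if e i % k = (j : ℕ) % k then
      (((e i / k).descFactorial ((j : ℕ) / k) : ℕ) : F) else 0).det ≠ 0 := by
  classical
  intro h0
  obtain ⟨v, hv, hMv⟩ := Matrix.exists_mulVec_eq_zero_iff.mpr h0
  have hne : (Finset.univ.filter fun j : Fin n => v j ≠ 0).Nonempty := by
    obtain ⟨j, hj⟩ := Function.ne_iff.mp hv
    exact ⟨j, by simpa using hj⟩
  obtain ⟨j0, hj0, hmax⟩ := Finset.exists_max_image _ (fun j : Fin n => (j : ℕ)) hne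
  simp only [Finset.mem_filter, Finset.mem_univ, true_and] at hj0 hmax
  obtain ⟨ι, hι⟩ := H j0 j0.2
  let P : Polynomial F := ∑ j : Fin n, if (j : ℕ) % k = (j0 : ℕ) % k then
    Polynomial.C (v j) * descPochhammer F ((j : ℕ) / k) else 0
  have hle : ∀ j : Fin n, v j ≠ 0 → (j : ℕ) / k ≤ (j0 : ℕ) / k := fun j hj =>
    Nat.div_le_div_right (hmax j hj)
  have hdeg : P.natDegree ≤ (j0 : ℕ) / k := by
    apply Polynomial.natDegree_sum_le_of_forall_le
    intro j _
    split_ifs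
    · by_cases hvj : v j = 0
      · simp [hvj]
      · refine (Polynomial.natDegree_C_mul_le _ _).trans ?_
        rw [descPochhammer_natDegree]
        exact hle j hvj
    · simp
  have hcoef : P.coeff ((j0 : ℕ) / k) = v j0 := by
    simp only [P, Polynomial.finsetSum_coeff]
    rw [Finset.sum_eq_single j0]
    · rw [if_pos rfl, Polynomial.coeff_C_mul]
      have := (monic_descPochhammer F ((j0 : ℕ) / k)).coeff_natDegree
      rw [descPochhammer_natDegree] at this
      rw [this, mul_one]
    · intro j _ hj
      split_ifs with hjr
      · by_cases hvj : v j = 0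
        · simp [hvj]
        · rw [Polynomial.coeff_C_mul, Polynomial.coeff_eq_zero_of_natDegree_lt, mul_zero]
          rw [descPochhammer_natDegree]
          refine lt_of_le_of_ne (hle j hvj) ?_
          intro hh
          apply hj
          apply Fin.ext
          rw [← Nat.div_add_mod (j : ℕ) k, ← Nat.div_add_mod (j0 : ℕ) k, hh, hjr]
      · simp
    · simp
  have hP : P = 0 := by
    apply Polynomial.eq_zero_of_natDegree_lt_card_of_eval_eq_zero P
      (f := fun t : Fin ((j0 : ℕ) / k + 1) => ((e (ι t) / k : ℕ) : F))
    · intro t t' htt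
      have ht := hι t (by omega)
      have ht' := hι t' (by omega)
      have hq : e (ι t) / k = e (ι t') / k := by
        by_contra hq
        rcases lt_or_gt_of_ne hq with hq | hq
        · exact aux_cast_inj (hfac _ ht'.1) hq htt
        · exact aux_cast_inj (hfac _ ht.1) hq htt.symm
      have hE : e (ι t) = e (ι t') := by
        rw [← Nat.div_add_mod (e (ι t)) k, ← Nat.div_add_mod (e (ι t')) k, hq, ht.2.1, ht'.2.1]
      exact Fin.ext (ht.2.2 t' (by omega) (he _ ht.1 _ ht'.1 hE))
    · intro t
      have ht := hι t (by omega)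
      have := congrFun hMv ⟨ι t, ht.1⟩
      simp only [Matrix.mulVec, dotProduct, Matrix.of_apply, Pi.zero_apply] at this
      simp only [P, Polynomial.eval_finsetSum]
      rw [← this]
      apply Finset.sum_congr rfl
      intro j _
      rw [ht.2.1]
      by_cases hj : (j : ℕ) % k = (j0 : ℕ) % k
      · rw [if_pos hj, if_pos hj.symm, Polynomial.eval_mul, Polynomial.eval_C,
          descPochhammer_eval_eq_descFactorial, mul_comm]
      · rw [if_neg hj, if_neg (Ne.symm hj)]; simp
    · simpa using Nat.lt_succ_of_le hdeg
  exact hj0 (by rw [← hcoef, hP, Polynomial.coeff_zero])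

/-- coefficient of a power of the power sum -/
theorem aux_coeff_pow {F : Type*} [Field F] (n k T : ℕ) (hk : 1 ≤ k) (d : Fin n →₀ ℕ)
    (hd : ∑ i, d i = k * T) :
    (∏ i, ((Nat.factorial (d i / k) : ℕ) : F)) *
      coeff d ((∑ i : Fin n, (X i : MvPolynomial (Fin n) F) ^ k) ^ T) =
      if ∀ i, k ∣ d i then ((Nat.factorial T : ℕ) : F) else 0 := by
  classical
  have key : ∀ c : Fin n → ℕ, coeff d (((Nat.multinomial Finset.univ c : ℕ) : MvPolynomial (Fin n) F) *
      ∏ i, ((X i : MvPolynomial (Fin n) F) ^ k) ^ c i) =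
      if (∀ i, d i = k * c i) then ((Nat.multinomial Finset.univ c : ℕ) : F) else 0 := by
    intro c
    have : ∏ i, ((X i : MvPolynomial (Fin n) F) ^ k) ^ c i =
        monomial (Finsupp.equivFunOnFinite.symm fun i => k * c i) 1 := by
      rw [monomial_eq, C_1, one_mul, Finsupp.prod_fintype _ _ (by simp)]
      simp [pow_mul]
    rw [this, ← map_natCast (C : F →+* MvPolynomial (Fin n) F), coeff_C_mul, coeff_monomial]
    by_cases h : ∀ i, d i = k * c i
    · rw [if_pos h, if_pos, mul_one]
      ext i; simp [h i]
    · rw [if_neg h, if_neg, mul_zero]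
      intro h'; apply h; intro i; rw [← h']; simp
  rw [Finset.sum_pow_eq_sum_piAntidiag, coeff_sum]
  simp only [key]
  split_ifs with h
  · rw [Finset.sum_eq_single (fun i => d i / k)]
    · rw [if_pos (fun i => (Nat.mul_div_cancel' (h i)).symm)]
      have := Nat.multinomial_spec Finset.univ (fun i => d i / k)
      have hs : ∑ i, d i / k = T := by
        have : k * ∑ i, d i / k = k * T := by
          rw [← hd, Finset.mul_sum]
          exact Finset.sum_congr rfl fun i _ => Nat.mul_div_cancel' (h i)
        exact Nat.eq_of_mul_eq_mul_left hk this
      rw [hs] at this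
      rw [← this]; push_cast; rfl
    · intro c _ hc
      rw [if_neg]
      intro h'
      apply hc
      funext i
      rw [h' i, Nat.mul_div_cancel_left _ hk]
    · intro hn
      rw [if_neg]
      intro h'
      apply hn
      rw [Finset.mem_piAntidiag]
      refine ⟨?_, by simp⟩
      apply Nat.eq_of_mul_eq_mul_left hk
      rw [← hd, Finset.mul_sum]
      exact Finset.sum_congr rfl fun i _ => Nat.mul_div_cancel' (h i)
  · rw [Finset.sum_eq_zero, mul_zero]
    intro c _
    rw [if_neg]
    intro h'
    exact h fun i => ⟨_, h' i⟩

theorem aux_term {F : Type*} [Field F] (n k T : ℕ) (hk : 1 ≤ k) (e : ℕ → ℕ)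
    (hsum : ∑ i : Fin n, e i = ∑ i : Fin n, (i : ℕ) + k * T) (σ : Equiv.Perm (Fin n)) :
    (∏ i : Fin n, ((Nat.factorial (e i / k) : ℕ) : F)) *
      coeff (Finsupp.equivFunOnFinite.symm fun i : Fin n => e i)
        ((∑ i : Fin n, (X i : MvPolynomial (Fin n) F) ^ k) ^ T *
          monomial (Finsupp.equivFunOnFinite.symm fun i : Fin n => ((σ i : Fin n) : ℕ)) 1) =
      ((Nat.factorial T : ℕ) : F) * ∏ i : Fin n, (if e i % k = ((σ i : Fin n) : ℕ) % k then
      (((e i / k).descFactorial (((σ i : Fin n) : ℕ) / k) : ℕ) : F) else 0) := by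
  classical
  rw [coeff_mul_monomial']
  split_ifs with hle
  · have hle' : ∀ i : Fin n, ((σ i : Fin n) : ℕ) ≤ e i := fun i => by simpa using hle i
    rw [mul_one]
    set d := (Finsupp.equivFunOnFinite.symm fun i : Fin n => e i) -
      (Finsupp.equivFunOnFinite.symm fun i : Fin n => ((σ i : Fin n) : ℕ)) with hd
    have hdi : ∀ i, d i = e i - (σ i : Fin n) := fun i => by simp [hd]
    have hds : ∑ i, d i = k * T := by
      have h1 : ∑ i, d i + ∑ i : Fin n, ((σ i : Fin n) : ℕ) = ∑ i : Fin n, e i := by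
        rw [← Finset.sum_add_distrib]
        exact Finset.sum_congr rfl fun i _ => by have := hdi i; have := hle' i; omega
      have h2 : ∑ i : Fin n, ((σ i : Fin n) : ℕ) = ∑ i : Fin n, (i : ℕ) :=
        Equiv.sum_comp σ (fun i : Fin n => (i : ℕ))
      omega
    have hc := aux_coeff_pow (F := F) n k T hk d hds
    by_cases hall : ∀ i, k ∣ d i
    · have hmod : ∀ i : Fin n, e i % k = ((σ i : Fin n) : ℕ) % k := fun i => by
        have := hall i
        rw [hdi] at this
        exact ((Nat.modEq_iff_dvd' (hle' i)).mpr this).symm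
      have hdiv : ∀ i : Fin n, d i / k = e i / k - ((σ i : Fin n) : ℕ) / k := fun i => by
        rw [hdi]
        have h1 := Nat.div_add_mod (e i) k
        have h2 := Nat.div_add_mod ((σ i : Fin n) : ℕ) k
        rw [hmod i] at h1
        have : e i - ((σ i : Fin n) : ℕ) = k * (e i / k - ((σ i : Fin n) : ℕ) / k) := by
          rw [Nat.mul_sub]; omega
        rw [this, Nat.mul_div_cancel_left _ hk]
      rw [if_pos hall] at hc
      rw [← hc]
      have : ∏ i : Fin n, ((Nat.factorial (e i / k) : ℕ) : F) =
        (∏ i : Fin n, ((Nat.factorial (d i / k) : ℕ) : F)) *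
        ∏ i : Fin n, (if e i % k = ((σ i : Fin n) : ℕ) % k then
      (((e i / k).descFactorial (((σ i : Fin n) : ℕ) / k) : ℕ) : F) else 0) := by
        rw [← Finset.prod_mul_distrib]
        refine Finset.prod_congr rfl fun i _ => ?_
        rw [if_pos (hmod i), hdiv, ← Nat.cast_mul,
          Nat.factorial_mul_descFactorial (Nat.div_le_div_right (hle' i))]
      rw [this]; ring
    · have hz : coeff d ((∑ i : Fin n, (X i : MvPolynomial (Fin n) F) ^ k) ^ T) = 0 := by
        -- direct: every monomial of a polynomial in the `k`-th powers is divisible by `k`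
        rw [Finset.sum_pow_eq_sum_piAntidiag, coeff_sum]
        refine Finset.sum_eq_zero fun c _ => ?_
        have : ∏ i, ((X i : MvPolynomial (Fin n) F) ^ k) ^ c i =
            monomial (Finsupp.equivFunOnFinite.symm fun i => k * c i) 1 := by
          rw [monomial_eq, C_1, one_mul, Finsupp.prod_fintype _ _ (by simp)]
          simp [pow_mul]
        rw [this, ← map_natCast (C : F →+* MvPolynomial (Fin n) F), coeff_C_mul, coeff_monomial,
          if_neg, mul_zero]
        intro h'; apply hall; intro i; rw [← h']; simp
      rw [hz, mul_zero]
      push Not at hall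
      obtain ⟨i, hi⟩ := hall
      rw [Finset.prod_eq_zero (Finset.mem_univ i), mul_zero]
      rw [if_neg]
      intro hmod
      apply hi
      rw [hdi]
      exact (Nat.modEq_iff_dvd' (hle' i)).mp hmod.symm
  · rw [mul_zero]
    have : ∃ i : Fin n, e i < ((σ i : Fin n) : ℕ) := by
      by_contra hcon
      push Not at hcon
      exact hle fun i => by simpa using hcon i
    obtain ⟨i, hi⟩ := this
    rw [Finset.prod_eq_zero (Finset.mem_univ i), mul_zero]
    split_ifs with hmod
    · rw [Nat.descFactorial_eq_zero_iff_lt.mpr, Nat.cast_zero]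
      refine lt_of_le_of_ne (Nat.div_le_div_right hi.le) fun h => ?_
      have h1 := Nat.div_add_mod (e i) k
      have h2 := Nat.div_add_mod ((σ i : Fin n) : ℕ) k
      rw [hmod, h] at h1
      omega
    · rfl

theorem aux_vand {F : Type*} [Field F] (n : ℕ) :
    (Matrix.vandermonde (X : Fin n → MvPolynomial (Fin n) F)).det =
      ∑ σ : Equiv.Perm (Fin n), C (((Equiv.Perm.sign σ : ℤˣ) : ℤ) : F) *
        monomial (Finsupp.equivFunOnFinite.symm fun i : Fin n => ((σ i : Fin n) : ℕ)) 1 := by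
  rw [← Matrix.det_transpose, Matrix.det_apply']
  refine Finset.sum_congr rfl fun σ _ => ?_
  rw [monomial_eq, C_1, one_mul, Finsupp.prod_fintype _ _ (by simp)]
  simp [Matrix.vandermonde_apply]

theorem aux_vand_deg {F : Type*} [Field F] (n : ℕ) :
    (Matrix.vandermonde (X : Fin n → MvPolynomial (Fin n) F)).det.totalDegree ≤
      ∑ i : Fin n, (i : ℕ) := by
  rw [aux_vand]
  apply totalDegree_finsetSum_le
  intro σ _
  refine (totalDegree_mul _ _).trans ?_
  rw [totalDegree_C, zero_add]
  refine (totalDegree_monomial_le _ _).trans ?_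
  rw [Finsupp.sum_fintype _ _ (by simp)]
  exact (Equiv.sum_comp σ (fun i : Fin n => (i : ℕ))).le

theorem aux_coeff {F : Type*} [Field F] (n k T : ℕ) (hk : 1 ≤ k) (e : ℕ → ℕ)
    (hsum : ∑ i : Fin n, e i = ∑ i : Fin n, (i : ℕ) + k * T) :
    (∏ i : Fin n, ((Nat.factorial (e i / k) : ℕ) : F)) *
      coeff (Finsupp.equivFunOnFinite.symm fun i : Fin n => e i)
        ((∑ i : Fin n, (X i : MvPolynomial (Fin n) F) ^ k) ^ T *
          (Matrix.vandermonde (X : Fin n → MvPolynomial (Fin n) F)).det) =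
      ((Nat.factorial T : ℕ) : F) *
      (Matrix.of fun i j : Fin n => if e i % k = (j : ℕ) % k then
        (((e i / k).descFactorial ((j : ℕ) / k) : ℕ) : F) else 0).det := by
  rw [aux_vand, ← Matrix.det_transpose, Matrix.det_apply', Finset.mul_sum, coeff_sum,
    Finset.mul_sum, Finset.mul_sum]
  refine Finset.sum_congr rfl fun σ _ => ?_
  rw [mul_left_comm, coeff_C_mul, mul_left_comm, aux_term n k T hk e hsum σ]
  simp only [Matrix.transpose_apply, Matrix.of_apply]
  ring

theorem aux_prod {F : Type*} [Field F] {σ : Type*} (k : ℕ) (s g : MvPolynomial σ F)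
    (hs : s.totalDegree ≤ k) (hg : g.totalDegree < k) (M : Multiset F) :
    ∃ R : MvPolynomial σ F, (M.map fun c => s + g - C c).prod = s ^ M.card + R ∧
      (R = 0 ∨ R.totalDegree < k * M.card) := by
  induction M using Multiset.induction_on with
  | empty => exact ⟨0, by simp, Or.inl rfl⟩
  | cons c M ih =>
    obtain ⟨R, hR, hd⟩ := ih
    refine ⟨s * R + (g - C c) * s ^ M.card + (g - C c) * R, ?_, Or.inr ?_⟩
    · rw [Multiset.map_cons, Multiset.prod_cons, hR, Multiset.card_cons]; ring
    · rw [Multiset.card_cons, Nat.mul_succ]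
      have hgc : (g - C c).totalDegree < k :=
        lt_of_le_of_lt (totalDegree_sub_C_le g c) hg
      have h1 : (s * R).totalDegree < k * M.card + k := by
        rcases hd with h | h
        · rw [h, mul_zero, totalDegree_zero]; omega
        · have := totalDegree_mul s R; omega
      have h2 : ((g - C c) * s ^ M.card).totalDegree < k * M.card + k := by
        have h3 := totalDegree_mul (g - C c) (s ^ M.card)
        have h4 := totalDegree_pow s M.card
        have h5 : M.card * s.totalDegree ≤ k * M.card := by
          rw [mul_comm]; exact Nat.mul_le_mul_right _ hs
        omega
      have h3 : ((g - C c) * R).totalDegree < k * M.card + k := by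
        rcases hd with h | h
        · rw [h, mul_zero, totalDegree_zero]; omega
        · have := totalDegree_mul (g - C c) R; omega
      exact lt_of_le_of_lt (totalDegree_add _ _)
        (max_lt (lt_of_le_of_lt (totalDegree_add _ _) (max_lt h1 h2)) h3)

theorem aux_core {F : Type*} [Field F] (n k T : ℕ) (hk : 1 ≤ k) (e : ℕ → ℕ)
    (hsum : ∑ i : Fin n, e i = ∑ i : Fin n, (i : ℕ) + k * T)
    (he : ∀ i < n, ∀ j < n, e i = e j → i = j)
    (hfac : ∀ i < n, ((Nat.factorial (e i / k) : ℕ) : F) ≠ 0)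
    (hT : ((Nat.factorial T : ℕ) : F) ≠ 0)
    (H : ∀ j < n, ∃ ι : ℕ → ℕ, ∀ t ≤ j / k, ι t < n ∧ e (ι t) % k = j % k ∧
      ∀ t' ≤ j / k, ι t = ι t' → t = t')
    (A : Finset F) (hA : ∀ i < n, e i < A.card)
    (g : MvPolynomial (Fin n) F) (hg : g.totalDegree < k) (Y : Finset F)
    (hY : ∀ x : Fin n → F, (∀ i, x i ∈ A) → Function.Injective x →
      MvPolynomial.eval x ((∑ i : Fin n, (X i : MvPolynomial (Fin n) F) ^ k) + g) ∈ Y) :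
    T < Y.card := by
  classical
  by_contra hlt
  push Not at hlt
  set s : MvPolynomial (Fin n) F := ∑ i : Fin n, (X i : MvPolynomial (Fin n) F) ^ k with hs
  have hsd : s.totalDegree ≤ k := by
    apply totalDegree_finsetSum_le
    intro i _
    rw [totalDegree_X_pow]
  set V := (Matrix.vandermonde (X : Fin n → MvPolynomial (Fin n) F)).det with hV
  let M : Multiset F := Y.val + Multiset.replicate (T - Y.card) 0
  have hM : M.card = T := by simp [M]; omega
  obtain ⟨R, hR, hRd⟩ := aux_prod k s g hsd hg M
  rw [hM] at hR hRd
  set E : Fin n →₀ ℕ := Finsupp.equivFunOnFinite.symm fun i : Fin n => e i with hE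
  have hEdeg : E.degree = ∑ i : Fin n, (i : ℕ) + k * T := by
    rw [← hsum, Finsupp.degree_eq_sum]; simp [hE]
  have hVd : V.totalDegree ≤ ∑ i : Fin n, (i : ℕ) := aux_vand_deg n
  have hRV : coeff E (R * V) = 0 := by
    rcases hRd with h | h
    · simp [h]
    · apply coeff_eq_zero_of_totalDegree_lt
      rw [← Finsupp.degree_apply, hEdeg]
      have := totalDegree_mul R V
      omega
  have hc0 : coeff E (s ^ T * V) ≠ 0 := by
    intro h0
    have := aux_coeff (F := F) n k T hk e hsum
    rw [h0, mul_zero] at this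
    exact mul_ne_zero hT (aux_det n k e he hfac H) this.symm
  set P := (M.map fun c => s + g - C c).prod * V with hP
  have hPc : coeff E P ≠ 0 := by
    rw [hP, hR, add_mul, coeff_add, hRV, add_zero]; exact hc0
  have hPd : P.totalDegree = E.degree := by
    apply le_antisymm
    · rw [hEdeg, hP, hR]
      have h1 := totalDegree_mul (s ^ T + R) V
      have h2 := totalDegree_add (s ^ T) R
      have h3 := totalDegree_pow s T
      have h5 : T * s.totalDegree ≤ k * T := by
        rw [mul_comm]; exact Nat.mul_le_mul_right _ hsd
      have h6 : R.totalDegree ≤ k * T := by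
        rcases hRd with h | h
        · simp [h]
        · exact h.le
      have h7 : max (s ^ T).totalDegree R.totalDegree ≤ k * T := max_le (h3.trans h5) h6
      omega
    · rw [Finsupp.degree_apply]
      exact le_totalDegree (mem_support_iff.mpr hPc)
  obtain ⟨x, hxA, hx⟩ := combinatorial_nullstellensatz_exists_eval_nonzero P E hPc hPd
    (fun _ => A) (fun i => by simpa [hE] using hA i i.2)
  apply hx
  by_cases hinj : Function.Injective x
  · have hmem := hY x hxA hinj
    rw [hP, map_mul, map_multiset_prod, Multiset.map_map]
    rw [Multiset.prod_eq_zero, zero_mul]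
    rw [Multiset.mem_map]
    refine ⟨_, Multiset.mem_add.mpr (Or.inl hmem), ?_⟩
    simp
  · have : eval x V = 0 := by
      rw [hV, RingHom.map_det]
      have h1 : (eval x).mapMatrix (Matrix.vandermonde (X : Fin n → MvPolynomial (Fin n) F)) =
          Matrix.vandermonde x := by
        ext i j; simp [Matrix.vandermonde_apply]
      rw [h1]
      by_contra h
      exact hinj (Matrix.det_vandermonde_ne_zero_iff.mp h)
    rw [hP, map_mul, this, mul_zero]

theorem aux_arith (n k d T w u n0 D : ℕ) (hk : 1 ≤ k) (hwu : (w = k ∧ u = 1) ∨ (w = 1 ∧ u = k))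
    (hn : n = w * n0) (hd : d = u * D) (hTN : T ≤ n0 * D) :
    ∃ n' ≤ n, ∃ e : ℕ → ℕ,
      (∑ i : Fin n', e i = ∑ i : Fin n', (i : ℕ) + k * T) ∧
      (∀ i < n', ∀ j < n', e i = e j → i = j) ∧
      (∀ i < n', e i / k ≤ T) ∧ (∀ i < n', e i < n' + d) ∧
      (∀ j < n', ∃ ι : ℕ → ℕ, ∀ t ≤ j / k, ι t < n' ∧ e (ι t) % k = j % k ∧
        ∀ t' ≤ j / k, ι t = ι t' → t = t') := by
  have hwuk : w * u = k := by rcases hwu with ⟨h1, h2⟩ | ⟨h1, h2⟩ <;> simp [h1, h2]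
  have hw : 1 ≤ w := by rcases hwu with ⟨h1, h2⟩ | ⟨h1, h2⟩ <;> omega
  have hu : 1 ≤ u := by rcases hwu with ⟨h1, h2⟩ | ⟨h1, h2⟩ <;> omega
  rcases Nat.eq_zero_or_pos T with h0 | hT
  · exact ⟨0, Nat.zero_le _, id, by simp [h0], by simp, by simp, by simp, by simp⟩
  have hD : 1 ≤ D := by
    rcases Nat.eq_zero_or_pos D with h | h
    · simp [h] at hTN; omega
    · exact h
  obtain ⟨q, s, hs1, hsD, hqs⟩ : ∃ q s, 1 ≤ s ∧ s ≤ D ∧ D * q + s = T := by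
    refine ⟨(T - 1) / D, (T - 1) % D + 1, by omega, Nat.mod_lt _ hD, ?_⟩
    have := Nat.div_add_mod (T - 1) D
    omega
  have hq : q + 1 ≤ n0 := by
    by_contra h
    have h1 : n0 ≤ q := by omega
    have := Nat.mul_le_mul_right D h1
    nlinarith
  have hus : u * s ≤ u * D := Nat.mul_le_mul_left _ hsD
  refine ⟨w + w * q, by nlinarith, fun i => i + u * (if i < w then s else D), ?_, ?_, ?_, ?_, ?_⟩
  · rw [Finset.sum_add_distrib, ← Finset.mul_sum, add_right_inj]
    rw [Fin.sum_univ_eq_sum_range (fun i => if i < w then s else D), Finset.sum_range_add]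
    rw [Finset.sum_congr rfl (fun i hi => if_pos (Finset.mem_range.mp hi)),
      Finset.sum_congr (s₂ := Finset.range (w * q)) (g := fun _ => D) rfl
      (fun i hi => if_neg (by omega))]
    simp only [Finset.sum_const, Finset.card_range, smul_eq_mul]
    rw [← hqs, ← hwuk]; ring
  · intro i _ j _ h
    dsimp only at h
    split_ifs at h <;> omega
  · intro i hi
    have hb : i + u * (if i < w then s else D) ≤ k * T := by
      split_ifs with hiw
      · have h1 : k * s ≤ k * T := Nat.mul_le_mul_left _ (by omega)
        have h2 : 1 ≤ u * s := Nat.mul_pos hu hs1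
        have h3 : i + u * s ≤ k * s := by
          rw [← hwuk, mul_assoc]
          nlinarith
        omega
      · have hq1 : 1 ≤ q := by
          rcases Nat.eq_zero_or_pos q with h | h
          · simp [h] at hi; omega
          · exact h
        have h1 : q + D ≤ T := by nlinarith
        have h2 : k * (q + D) ≤ k * T := Nat.mul_le_mul_left _ h1
        have h4 : 1 ≤ u * D := Nat.mul_pos hu hD
        have h3 : w - 1 + u * D ≤ k * D := by
          rw [← hwuk, mul_assoc]
          obtain ⟨v, rfl⟩ : ∃ v, w = v + 1 := ⟨w - 1, by omega⟩
          simp only [Nat.add_sub_cancel]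
          nlinarith
        have h5 : w * q ≤ k * q := by
          rw [← hwuk]; exact Nat.mul_le_mul_right _ (Nat.le_mul_of_pos_right _ hu)
        rw [Nat.mul_add] at h2
        omega
    exact Nat.div_le_of_le_mul hb
  · intro i hi
    dsimp only
    rw [hd]
    split_ifs <;> omega
  · intro j hj
    rcases hwu with ⟨h1, h2⟩ | ⟨h1, h2⟩
    · subst h1 h2
      refine ⟨fun t => w * t + (j + (w - 1) * (if t = 0 then s else D)) % w, fun t ht => ?_⟩
      have hlt : ∀ x, x % w < w := fun x => Nat.mod_lt _ hw
      have hjq : j / w ≤ q := by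
        have : j / w < q + 1 := by
          rw [Nat.div_lt_iff_lt_mul hw]; nlinarith
        omega
      refine ⟨?_, ?_, ?_⟩
      · have := hlt (j + (w - 1) * (if t = 0 then s else D))
        have h3 : w * t ≤ w * q := Nat.mul_le_mul_left _ (ht.trans hjq)
        dsimp only
        omega
      · have hif : (if w * t + (j + (w - 1) * (if t = 0 then s else D)) % w < w then s else D) =
            if t = 0 then s else D := by
          by_cases h : t = 0
          · subst h
            simp [hlt]
          · rw [if_neg h, if_neg]
            have : w * 1 ≤ w * t := Nat.mul_le_mul_left _ (by omega)
            omega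
        dsimp only
        rw [hif]
        generalize (if t = 0 then s else D) = x
        have h3 : w * t + (j + (w - 1) * x) % w + 1 * x ≡ 0 + (j + (w - 1) * x) + 1 * x [MOD w] :=
          Nat.ModEq.add_right _ (Nat.ModEq.add (by simp [Nat.ModEq]) (Nat.mod_modEq _ _))
        have h4 : 0 + (j + (w - 1) * x) + 1 * x = j + w * x := by
          obtain ⟨v, rfl⟩ : ∃ v, w = v + 1 := ⟨w - 1, by omega⟩
          simp only [Nat.add_sub_cancel]; ring
        rw [h4] at h3
        rw [h3]; simp
      · intro t' _ htt
        dsimp only at htt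
        have h5 := congrArg (· / w) htt
        simpa [Nat.mul_add_div hw, Nat.div_eq_of_lt (hlt _)] using h5
    · subst h1 h2
      refine ⟨fun t => u * t + j % u, fun t ht => ⟨?_, ?_, ?_⟩⟩
      · have := Nat.div_add_mod j u
        have h3 : u * t ≤ u * (j / u) := Nat.mul_le_mul_left _ ht
        dsimp only
        omega
      · dsimp only
        rw [add_assoc, Nat.mul_add_mod, Nat.add_mul_mod_self_left, Nat.mod_mod]
      · intro t' _ htt
        dsimp only at htt
        exact Nat.eq_of_mul_eq_mul_left hu (by omega)

theorem aux_deg {F : Type*} [Field F] {σ τ : Type*} (g : MvPolynomial σ F)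
    (φ : σ → MvPolynomial τ F) (hφ : ∀ i, (φ i).totalDegree ≤ 1) :
    (aeval φ g).totalDegree ≤ g.totalDegree := by
  rw [aeval_def, eval₂_eq]
  apply totalDegree_finsetSum_le
  intro m hm
  refine (totalDegree_mul _ _).trans ?_
  rw [algebraMap_eq, totalDegree_C, zero_add]
  refine (totalDegree_finsetProd _ _).trans ?_
  refine le_trans ?_ (le_totalDegree hm)
  refine Finset.sum_le_sum fun i _ => ?_
  refine (totalDegree_pow _ _).trans ?_
  have := Nat.mul_le_mul_left (m i) (hφ i)
  simpa using this

theorem aux_red {F : Type*} [Field F] (n n' k T d : ℕ) (hk : 1 ≤ k) (hn' : n' ≤ n) (e : ℕ → ℕ)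
    (hsum : ∑ i : Fin n', e i = ∑ i : Fin n', (i : ℕ) + k * T)
    (he : ∀ i < n', ∀ j < n', e i = e j → i = j)
    (hfac : ∀ i < n', e i / k ≤ T)
    (hT : ((Nat.factorial T : ℕ) : F) ≠ 0)
    (H : ∀ j < n', ∃ ι : ℕ → ℕ, ∀ t ≤ j / k, ι t < n' ∧ e (ι t) % k = j % k ∧
      ∀ t' ≤ j / k, ι t = ι t' → t = t')
    (A : Finset F) (hcard : A.card = n + d) (hA : ∀ i < n', e i < n' + d)
    (g : MvPolynomial (Fin n) F) (hg : g.totalDegree < k) (Y : Finset F)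
    (hY : ∀ x : Fin n → F, (∀ i, x i ∈ A) → Function.Injective x →
      MvPolynomial.eval x ((∑ i : Fin n, (X i : MvPolynomial (Fin n) F) ^ k) + g) ∈ Y) :
    T < Y.card := by
  classical
  obtain ⟨t, rfl⟩ := Nat.exists_eq_add_of_le hn'
  obtain ⟨B, hBA, hB⟩ := Finset.exists_subset_card_eq (s := A) (n := t) (by omega)
  let y : Fin t → F := fun i => ((B.equivFinOfCardEq hB).symm i : F)
  have hyinj : Function.Injective y :=
    Subtype.val_injective.comp (B.equivFinOfCardEq hB).symm.injective
  have hyB : ∀ i, y i ∈ B := fun i => ((B.equivFinOfCardEq hB).symm i).2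
  let φ : Fin (n' + t) → MvPolynomial (Fin n') F := Fin.append X (fun i => C (y i))
  have hφ : ∀ i, (φ i).totalDegree ≤ 1 := by
    intro i
    induction i using Fin.addCases with
    | left i => simp [φ]
    | right i => simp [φ]
  let g' : MvPolynomial (Fin n') F := aeval φ g + C (∑ i, y i ^ k)
  refine aux_core n' k T hk e hsum he ?_ hT H (A \ B) ?_ g' ?_ Y ?_
  · intro i hi h0
    obtain ⟨c, hc⟩ := Nat.factorial_dvd_factorial (hfac i hi)
    apply hT
    rw [hc, Nat.cast_mul, h0, zero_mul]
  · intro i hi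
    have := hA i hi
    rw [Finset.card_sdiff_of_subset hBA]
    omega
  · refine lt_of_le_of_lt (totalDegree_add _ _) (max_lt ?_ ?_)
    · exact lt_of_le_of_lt (aux_deg g φ hφ) hg
    · rw [totalDegree_C]; omega
  · intro x hx hxi
    have hx' : ∀ i, x i ∈ A ∧ x i ∉ B := fun i => Finset.mem_sdiff.mp (hx i)
    have := hY (Fin.append x y) ?_ ?_
    · convert this using 1
      have h1 : eval x (aeval φ g) = eval (Fin.append x y) g := by
        rw [← MvPolynomial.coe_aeval_eq_eval, ← MvPolynomial.coe_aeval_eq_eval]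
        simp only [RingHom.coe_coe]
        rw [← AlgHom.comp_apply, comp_aeval]
        congr 2
        funext i
        induction i using Fin.addCases with
        | left i => simp [φ]
        | right i => simp [φ]
      simp only [g', map_add, h1, map_sum, map_pow, eval_X, eval_C, Fin.sum_univ_add,
        Fin.append_left, Fin.append_right]
      ring
    · intro i
      induction i using Fin.addCases with
      | left i => simpa using (hx' i).1
      | right i => simpa using hBA (hyB i)
    · rw [Fin.append_injective_iff]
      refine ⟨hxi, hyinj, ?_⟩
      intro i j h
      exact (hx' i).2 (h ▸ hyB j)

theorem aux_main {F : Type*} [Field F] (n k m T : ℕ)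
    (hk1 : 1 ≤ k) (hmn : n ≤ m)
    (hdvd : k ∣ n ∨ k ∣ (m - n))
    (hTN : T ≤ n * (m - n) / k) (hT : ((Nat.factorial T : ℕ) : F) ≠ 0)
    (A : Finset F) (hA : A.card = m)
    (g : MvPolynomial (Fin n) F) (hg : g.totalDegree < k) :
    T + 1 ≤ {y : F | ∃ x : Fin n → F, (∀ i, x i ∈ A) ∧ Function.Injective x ∧
          MvPolynomial.eval x ((∑ i : Fin n, (X i : MvPolynomial (Fin n) F) ^ k) + g) = y}.ncard := by
  classical
  set Z := {y : F | ∃ x : Fin n → F, (∀ i, x i ∈ A) ∧ Function.Injective x ∧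
          MvPolynomial.eval x ((∑ i : Fin n, (X i : MvPolynomial (Fin n) F) ^ k) + g) = y} with hZ
  have hfin : Z.Finite := by
    apply ((Fintype.piFinset fun _ : Fin n => A).image fun x => MvPolynomial.eval x
      ((∑ i : Fin n, (X i : MvPolynomial (Fin n) F) ^ k) + g)).finite_toSet.subset
    rintro y ⟨x, hx, -, rfl⟩
    exact Finset.mem_coe.mpr (Finset.mem_image_of_mem _ (Fintype.mem_piFinset.mpr hx))
  rw [Set.ncard_eq_toFinset_card Z hfin]
  have hex : ∃ w u n0 D : ℕ, ((w = k ∧ u = 1) ∨ (w = 1 ∧ u = k)) ∧ n = w * n0 ∧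
      m - n = u * D ∧ T ≤ n0 * D := by
    rcases hdvd with ⟨c, hc⟩ | ⟨c, hc⟩
    · refine ⟨k, 1, c, m - n, Or.inl ⟨rfl, rfl⟩, hc, by simp, ?_⟩
      rw [hc, mul_assoc, Nat.mul_div_cancel_left _ hk1, ← hc] at hTN
      exact hTN
    · refine ⟨1, k, n, c, Or.inr ⟨rfl, rfl⟩, by simp, hc, ?_⟩
      rw [hc, mul_left_comm, Nat.mul_div_cancel_left _ hk1] at hTN
      exact hTN
  obtain ⟨w, u, n0, D, hwu, h1, h2, h3⟩ := hex
  obtain ⟨n', hn', e, hsum, he, hfac, hlt, H⟩ := aux_arith n k (m - n) T w u n0 D hk1 hwu h1 h2 h3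
  refine aux_red n n' k T (m - n) hk1 hn' e hsum he hfac hT H A (by omega) hlt g hg _ ?_
  intro x hx hxi
  rw [Set.Finite.mem_toFinset]
  exact ⟨x, hx, hxi, rfl⟩

theorem stmt_18 {F : Type*} [Field F] (n k m : ℕ) (hn : 2 ≤ n)
    (hk1 : 1 ≤ k) (hkn : k ≤ n) (hmn : n ≤ m)
    (hdvd : k ∣ n ∨ k ∣ (m - n))
    (A : Finset F) (hA : A.card = m)
    (g f : MvPolynomial (Fin n) F)
    (hf : f = (∑ i : Fin n, (X i : MvPolynomial (Fin n) F) ^ k) + g)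
    (hg : g.totalDegree < k) :
    min (if ringChar F = 0 then (⊤ : ℕ∞) else (ringChar F : ℕ∞))
        ((n * (m - n) / k + 1 : ℕ)) ≤
      ({y : F | ∃ x : Fin n → F, (∀ i, x i ∈ A) ∧ Function.Injective x ∧
          MvPolynomial.eval x f = y}.ncard : ℕ∞) := by
  subst hf
  split_ifs with h0
  · refine (min_le_right _ _).trans ?_
    have : CharZero F := by
      have := ringChar.of_eq h0
      exact CharP.charP_to_charZero F
    exact_mod_cast aux_main n k m (n * (m - n) / k) hk1 hmn hdvd le_rfl
      (Nat.cast_ne_zero.mpr (Nat.factorial_ne_zero _)) A hA g hg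
  · have hp : (ringChar F).Prime := (CharP.char_is_prime_or_zero F (ringChar F)).resolve_right h0
    have hp2 := hp.two_le
    have key := aux_main (F := F) n k m (min (n * (m - n) / k) (ringChar F - 1)) hk1 hmn hdvd
      (min_le_left _ _) (by
        intro h
        rw [ringChar.spec, hp.dvd_factorial] at h
        omega) A hA g hg
    refine le_trans ?_ (Nat.cast_le.mpr key)
    rw [min_le_iff, Nat.cast_le, Nat.cast_le]
    omega
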